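/- Let M be the 27 × 27 integer matrix obtained by stacking vertically the three Kronecker products r ⊗ I₃ ⊗ I₃, I₃ ⊗ r ⊗ I₃, and I₃ ⊗ I₃ ⊗ r, where I₃ is the 3 × 3 identity matrix and r = (1, 1, 1). Let x_p = (0,1,0,0,52,0,0,1,1,0,52,0,54,2757,0,0,53,53,0,1,1,0,53,53,1,0,0) ∈ ℤ²⁷. Then the set of vectors x ∈ ℤ²⁷ with all coordinates nonnegative satisfying M x = M x_p and x₂₇ = 0 has exactly 2 elements. -/

import Mathlib

/-!
Read `x ∈ ℤ²⁷` as a `3 × 3 × 3` array: `M x` lists the sums of `x` along the 27 axis-parallel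
lines. An array with vanishing line sums is determined by its entries on any `2 × 2 × 2` subarray.
A nonnegative solution `x` satisfies `x ≥ x_p` wherever `x_p` vanishes. Since `x - x_p` sums to zero
on two lines of zeros of `x_p` and, because `x₂₇ = 0`, also on the four zeros
`{1, 2} × {1, 2} × {3}`, it vanishes at seven of the eight entries of the subarray
`{1, 2} × {1, 2} × {1, 3}`. Hence `x - x_p` is a multiple `t` of an alternating sign pattern on the
corners of a box, and the two entries `-t` and `1 + t` of `x` leave only `t ∈ {-1, 0}`.
-/

open Matrix Kronecker

/-- The 1 × 3 all-ones row vector `r = (1, 1, 1)`. -/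
def rOnes : Matrix (Fin 1) (Fin 3) ℤ := Matrix.of fun _ _ => 1

/-- Lexicographic identification of index triples `(i₁, i₂, i₃)` with `Fin 27`
(first coordinate most significant), matching the lexicographic ordering of the triples
`(i₁, i₂, i₃) ∈ {1, 2, 3}³` used to index the 27 coordinates. -/
def colEquiv : (Fin 3 × Fin 3) × Fin 3 ≃ Fin 27 :=
  (Equiv.prodCongr finProdFinEquiv (Equiv.refl (Fin 3))).trans finProdFinEquiv

def rowEquiv1 : (Fin 1 × Fin 3) × Fin 3 ≃ Fin 9 :=
  (Equiv.prodCongr finProdFinEquiv (Equiv.refl (Fin 3))).trans finProdFinEquiv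

def rowEquiv2 : (Fin 3 × Fin 1) × Fin 3 ≃ Fin 9 :=
  (Equiv.prodCongr finProdFinEquiv (Equiv.refl (Fin 3))).trans finProdFinEquiv

def rowEquiv3 : (Fin 3 × Fin 3) × Fin 1 ≃ Fin 9 :=
  (Equiv.prodCongr finProdFinEquiv (Equiv.refl (Fin 1))).trans finProdFinEquiv

/-- The 27 × 27 matrix obtained by stacking vertically the three Kronecker products
`r ⊗ I₃ ⊗ I₃`, `I₃ ⊗ r ⊗ I₃` and `I₃ ⊗ I₃ ⊗ r`, where `I₃` is the 3 × 3 identity matrix and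
`r = (1, 1, 1)` is the 1 × 3 all-ones row, with columns indexed lexicographically by triples. -/
def M : Matrix (Fin 27) (Fin 27) ℤ :=
  Matrix.reindex
    ((rowEquiv1.sumCongr (rowEquiv2.sumCongr rowEquiv3)).trans
      (((Equiv.refl (Fin 9)).sumCongr finSumFinEquiv).trans finSumFinEquiv))
    colEquiv
    (Matrix.fromRows
      (rOnes ⊗ₖ (1 : Matrix (Fin 3) (Fin 3) ℤ) ⊗ₖ (1 : Matrix (Fin 3) (Fin 3) ℤ))
      (Matrix.fromRows
        ((1 : Matrix (Fin 3) (Fin 3) ℤ) ⊗ₖ rOnes ⊗ₖ (1 : Matrix (Fin 3) (Fin 3) ℤ))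
        ((1 : Matrix (Fin 3) (Fin 3) ℤ) ⊗ₖ (1 : Matrix (Fin 3) (Fin 3) ℤ) ⊗ₖ rOnes)))

/-- The particular solution of block 332 (coordinates indexed lexicographically by triples,
coordinate 27 corresponding to (3,3,3)). -/
def xp : Fin 27 → ℤ := ![0,1,0,0,52,0,0,1,1,0,52,0,54,2757,0,0,53,53,0,1,1,0,53,53,1,0,0]

section SignedBox

variable {ι κ μ R : Type*} [DecidableEq ι] [DecidableEq κ] [DecidableEq μ] [Ring R]

/-- The signed box with opposite corners `(a, b, c)` and `(a', b', c')`: the outer product of the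
differences of unit vectors `e_a - e_a'`, `e_b - e_b'` and `e_c - e_c'`. -/
def signedBox (a a' : ι) (b b' : κ) (c c' : μ) (i : ι) (j : κ) (k : μ) : R :=
  (Pi.single a 1 - Pi.single a' 1 : ι → R) i * (Pi.single b 1 - Pi.single b' 1 : κ → R) j *
    (Pi.single c 1 - Pi.single c' 1 : μ → R) k

lemma signedBox_apply_of_ne (a : ι) (b : κ) (c : μ) {a' i : ι} {b' j : κ} {c' k : μ}
    (hi : i ≠ a') (hj : j ≠ b') (hk : k ≠ c') :
    signedBox a a' b b' c c' i j k = if (i, j, k) = (a, b, c) then (1 : R) else 0 := by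
  simp only [signedBox, Pi.sub_apply, Pi.single_apply, if_neg hi, if_neg hj, if_neg hk, sub_zero,
    Prod.mk.injEq]
  split_ifs <;> simp_all

end SignedBox

section LineSums

variable {ι κ μ R : Type*} [Fintype ι] [Fintype κ] [Fintype μ]

/-- The module of three-dimensional arrays whose sum along every axis-parallel line vanishes. -/
def lineSumKernel (ι κ μ R : Type*) [Fintype ι] [Fintype κ] [Fintype μ] [Semiring R] :
    Submodule R (ι → κ → μ → R) where
  carrier := {z | (∀ j k, ∑ i, z i j k = 0) ∧ (∀ i k, ∑ j, z i j k = 0) ∧ ∀ i j, ∑ k, z i j k = 0}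
  zero_mem' := by simp
  add_mem' := by
    rintro z w ⟨hz₁, hz₂, hz₃⟩ ⟨hw₁, hw₂, hw₃⟩
    simp [Finset.sum_add_distrib, *]
  smul_mem' := by
    rintro c z ⟨hz₁, hz₂, hz₃⟩
    simp [← Finset.mul_sum, *]

lemma mem_lineSumKernel [Semiring R] {z : ι → κ → μ → R} :
    z ∈ lineSumKernel ι κ μ R ↔
      (∀ j k, ∑ i, z i j k = 0) ∧ (∀ i k, ∑ j, z i j k = 0) ∧ ∀ i j, ∑ k, z i j k = 0 :=
  Iff.rfl

lemma eq_zero_of_sum_eq_zero_of_forall_ne [AddCommMonoid R] {f : ι → R} (a : ι)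
    (hsum : ∑ i, f i = 0) (hf : ∀ i ≠ a, f i = 0) (i : ι) : f i = 0 := by
  by_cases hi : i = a
  · rw [hi, ← Fintype.sum_eq_single a hf, hsum]
  · exact hf i hi

lemma eq_zero_of_mem_lineSumKernel [Semiring R] {z : ι → κ → μ → R}
    (hz : z ∈ lineSumKernel ι κ μ R) (a : ι) (b : κ) (c : μ)
    (h : ∀ i ≠ a, ∀ j ≠ b, ∀ k ≠ c, z i j k = 0) : z = 0 := by
  obtain ⟨hz₁, hz₂, hz₃⟩ := hz
  have h₃ : ∀ i ≠ a, ∀ j ≠ b, ∀ k, z i j k = 0 := fun i hi j hj =>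
    eq_zero_of_sum_eq_zero_of_forall_ne c (hz₃ i j) (h i hi j hj)
  have h₂ : ∀ i ≠ a, ∀ j k, z i j k = 0 := fun i hi j k =>
    eq_zero_of_sum_eq_zero_of_forall_ne b (hz₂ i k) (fun j hj => h₃ i hi j hj k) j
  funext i j k
  exact eq_zero_of_sum_eq_zero_of_forall_ne a (hz₁ j k) (fun i hi => h₂ i hi j k) i

variable [DecidableEq ι] [DecidableEq κ] [DecidableEq μ] [Ring R]

lemma signedBox_mem_lineSumKernel (a a' : ι) (b b' : κ) (c c' : μ) :
    signedBox a a' b b' c c' ∈ lineSumKernel ι κ μ R := by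
  simp [mem_lineSumKernel, signedBox, ← Finset.sum_mul, ← Finset.mul_sum]

lemma eq_smul_signedBox_of_mem_lineSumKernel {z : ι → κ → μ → R}
    (hz : z ∈ lineSumKernel ι κ μ R) (a a' : ι) (b b' : κ) (c c' : μ)
    (h : ∀ i ≠ a', ∀ j ≠ b', ∀ k ≠ c', (i, j, k) ≠ (a, b, c) → z i j k = 0) :
    z = z a b c • signedBox a a' b b' c c' := by
  rw [← sub_eq_zero]
  refine eq_zero_of_mem_lineSumKernel
    (sub_mem hz (Submodule.smul_mem _ _ (signedBox_mem_lineSumKernel ..))) a' b' c' ?_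
  intro i hi j hj k hk
  simp only [Pi.sub_apply, Pi.smul_apply, smul_eq_mul, signedBox_apply_of_ne _ _ _ hi hj hk]
  split_ifs with hijk
  · obtain ⟨rfl, rfl, rfl⟩ : i = a ∧ j = b ∧ k = c := by simpa using hijk
    simp
  · simp [h i hi j hj k hk hijk]

end LineSums

section Kronecker

variable {l m n R : Type*} [Fintype m] [Fintype n] [NonAssocSemiring R]

lemma kronecker_one_mulVec [DecidableEq n] (A : Matrix l m R) (v : m × n → R) (i : l) (j : n) :
    ((A ⊗ₖ (1 : Matrix n n R)) *ᵥ v) (i, j) = (A *ᵥ fun i' => v (i', j)) i := by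
  simp [mulVec, dotProduct, Fintype.sum_prod_type, one_apply]

lemma one_kronecker_mulVec [DecidableEq m] (A : Matrix l n R) (v : m × n → R) (i : m) (j : l) :
    (((1 : Matrix m m R) ⊗ₖ A) *ᵥ v) (i, j) = (A *ᵥ fun j' => v (i, j')) j := by
  simp [mulVec, dotProduct, Fintype.sum_prod_type, one_apply]

end Kronecker

lemma rOnes_mulVec (v : Fin 3 → ℤ) (i : Fin 1) : (rOnes *ᵥ v) i = ∑ j, v j := by
  simp [rOnes, mulVec, dotProduct]

/-- The vector `x ∈ ℤ²⁷` read as a `3 × 3 × 3` array, with indices starting at `0`. -/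
def toArray : (Fin 27 → ℤ) ≃ₗ[ℤ] (Fin 3 → Fin 3 → Fin 3 → ℤ) :=
  LinearEquiv.funCongrLeft ℤ ℤ colEquiv ≪≫ₗ LinearEquiv.curry ℤ ℤ _ _ ≪≫ₗ
    LinearEquiv.curry ℤ (Fin 3 → ℤ) _ _

lemma toArray_apply (x : Fin 27 → ℤ) (i j k : Fin 3) :
    toArray x i j k = x (colEquiv ((i, j), k)) :=
  rfl

lemma M_mulVec_eq_zero_iff (x : Fin 27 → ℤ) :
    M *ᵥ x = 0 ↔ toArray x ∈ lineSumKernel (Fin 3) (Fin 3) (Fin 3) ℤ := by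
  rw [M, reindex_apply, submatrix_mulVec_equiv, Equiv.symm_symm, Equiv.comp_symm_eq]
  simp [fromRows_mulVec, mem_lineSumKernel, funext_iff, kronecker_one_mulVec,
    one_kronecker_mulVec, rOnes_mulVec, toArray_apply]

lemma M_mulVec_eq_iff (x y : Fin 27 → ℤ) :
    M *ᵥ x = M *ᵥ y ↔ toArray (x - y) ∈ lineSumKernel (Fin 3) (Fin 3) (Fin 3) ℤ := by
  rw [← M_mulVec_eq_zero_iff, mulVec_sub, sub_eq_zero]

/-- The difference of the two solutions: the signed box on the index triples
`{2, 3} × {2, 3} × {1, 2}`. -/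
def solutionDiff : Fin 27 → ℤ :=
  toArray.symm (signedBox 1 2 1 2 0 1)

lemma toArray_sub_xp_eq_zero {x : Fin 27 → ℤ} (hx : ∀ i, 0 ≤ x i) (hM : M *ᵥ x = M *ᵥ xp)
    (h27 : x 26 = 0) :
    ∀ i ≠ 2, ∀ j ≠ 2, ∀ k ≠ 1, (i, j, k) ≠ (1, 1, 0) → toArray (x - xp) i j k = 0 := by
  obtain ⟨h₁, h₂, -⟩ := mem_lineSumKernel.1 ((M_mulVec_eq_iff x xp).1 hM)
  have hpos (i j k : Fin 3) (hp : toArray xp i j k = 0) : 0 ≤ toArray (x - xp) i j k := by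
    simpa [hp, toArray_apply x] using hx (colEquiv ((i, j), k))
  have hlast : toArray (x - xp) 2 2 2 = 0 := sub_eq_zero.2 h27
  generalize toArray (x - xp) = z at h₁ h₂ hpos hlast ⊢
  simp only [Fin.sum_univ_three] at h₁ h₂
  have hline₁ : z 0 0 0 = 0 ∧ z 1 0 0 = 0 := by
    have := h₁ 0 0
    have := hpos 0 0 0 rfl
    have := hpos 1 0 0 rfl
    have := hpos 2 0 0 rfl
    omega
  have hline₂ : z 0 1 0 = 0 := by
    have := h₂ 0 0
    have := hpos 0 0 0 rfl
    have := hpos 0 1 0 rfl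
    have := hpos 0 2 0 rfl
    omega
  have hface_sum : z 0 0 2 + z 0 1 2 + z 1 0 2 + z 1 1 2 = 0 := by
    linarith [h₁ 2 2, h₂ 0 2, h₂ 1 2]
  have hface : z 0 0 2 = 0 ∧ z 0 1 2 = 0 ∧ z 1 0 2 = 0 ∧ z 1 1 2 = 0 := by
    have := hpos 0 0 2 rfl
    have := hpos 0 1 2 rfl
    have := hpos 1 0 2 rfl
    have := hpos 1 1 2 rfl
    omega
  simp [Fin.forall_fin_succ, hline₁, hline₂, hface]

lemma eq_xp_or_eq_xp_sub_solutionDiff {x : Fin 27 → ℤ} (hx : ∀ i, 0 ≤ x i)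
    (hM : M *ᵥ x = M *ᵥ xp) (h27 : x 26 = 0) : x = xp ∨ x = xp - solutionDiff := by
  obtain ⟨t, ht⟩ : ∃ t : ℤ, toArray (x - xp) = t • signedBox 1 2 1 2 0 1 :=
    ⟨_, eq_smul_signedBox_of_mem_lineSumKernel ((M_mulVec_eq_iff x xp).1 hM) _ _ _ _ _ _
      (toArray_sub_xp_eq_zero hx hM h27)⟩
  have hxt : x = xp + t • solutionDiff := by
    rw [solutionDiff, ← map_smul, ← ht, LinearEquiv.symm_apply_apply, add_sub_cancel]
  have h21 : x 21 = -t := by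
    simpa [show solutionDiff 21 = -1 by decide, show xp 21 = 0 from rfl] using congrFun hxt 21
  have h24 : x 24 = 1 + t := by
    simpa [show solutionDiff 24 = 1 by decide, show xp 24 = 1 from rfl] using congrFun hxt 24
  obtain rfl | rfl : t = 0 ∨ t = -1 := by
    have := hx 21
    have := hx 24
    omega
  · exact .inl (by simpa using hxt)
  · exact .inr (by simpa [sub_eq_add_neg] using hxt)

lemma M_mulVec_xp_sub_solutionDiff : M *ᵥ (xp - solutionDiff) = M *ᵥ xp := by
  rw [M_mulVec_eq_iff, sub_sub_cancel_left, map_neg, solutionDiff, LinearEquiv.apply_symm_apply]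
  exact neg_mem (signedBox_mem_lineSumKernel ..)

/-- The set of nonnegative integer vectors \`x\` with \`M x = M x_p\` and \`x₂₇ = 0\` (block 332) has exactly 2 elements. -/
theorem block332_solution_count :
    {x : Fin 27 → ℤ | (∀ i, 0 ≤ x i) ∧ M.mulVec x = M.mulVec xp ∧ x 26 = 0}.ncard = 2 := by
  have hsol : {x : Fin 27 → ℤ | (∀ i, 0 ≤ x i) ∧ M.mulVec x = M.mulVec xp ∧ x 26 = 0} =
      {xp, xp - solutionDiff} := by
    ext x
    constructor
    · rintro ⟨hx, hM, h27⟩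
      exact eq_xp_or_eq_xp_sub_solutionDiff hx hM h27
    · rintro (rfl | rfl)
      · exact ⟨by decide, rfl, rfl⟩
      · exact ⟨by decide, M_mulVec_xp_sub_solutionDiff, by decide⟩
  rw [hsol]
  exact Set.ncard_pair (by decide)
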